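/- Let ν ∈ (0,1), t0 > 0 and η ∈ ℂ, and define f : (t0,∞) → ℂ by f(t) = E_{ν,1}(η (log(t/t0))^ν) = ∑_{k=0}^∞ η^k (log(t/t0))^{νk} / Γ(νk+1). Then for every t > t0 the Caputo-type Hadamard fractional derivative of order ν (with base point t0) of f satisfies (D^ν f)(t) = η · f(t), i.e. f is an eigenfunction of D^ν with eigenvalue η. -/

import Mathlib

open MeasureTheory intervalIntegral

/-- The two-parameter Mittag-Leffler function `E_{γ,μ}(z) = ∑ z^k / Γ(γ k + μ)`. -/
noncomputable def mittagLeffler (γ μ : ℝ) (z : ℂ) : ℂ :=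
  ∑' k : ℕ, z ^ k / (Real.Gamma (γ * k + μ) : ℂ)

/-- The Caputo-type Hadamard fractional derivative of order `ν ∈ (0,1)` with base
point `t0 > 0`, applied componentwise to a complex-valued function:
`(D^ν u)(t) = (1/Γ(1-ν)) ∫_{t0}^t (log (t/τ))^{-ν} (τ u'(τ)) dτ/τ`. -/
noncomputable def hadamardCaputoC (ν t0 : ℝ) (u : ℝ → ℂ) (t : ℝ) : ℂ :=
  (1 / (Real.Gamma (1 - ν) : ℂ)) *
    ∫ τ in t0..t, (((Real.log (t / τ)) ^ (-ν) : ℝ) : ℂ) * ((τ : ℂ) * deriv u τ) / (τ : ℂ)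

/-!
In the variable `s = log (τ / t0)` the Hadamard–Caputo derivative of order `ν` becomes the
Riemann–Liouville integral of order `1 - ν` of the ordinary derivative. Differentiating the series
of `E_{ν,1}(η s^ν)` gives `η s^(ν-1) E_{ν,ν}(η s^ν)`, and the beta integral, applied term by term,
shows that the integral of order `α` sends `s^(μ-1) E_{ν,μ}(η s^ν)` to
`s^(μ+α-1) E_{ν,μ+α}(η s^ν)`. With `μ = ν` and `α = 1 - ν` the power disappears and
`E_{ν,1}(η s^ν)` is back, multiplied by `η`.
-/

lemma exp_neg_mul_rpow_le_Gamma_add_one {R x : ℝ} (hR : 0 ≤ R) (hx : 0 ≤ x) :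
    Real.exp (-R) * R ^ x ≤ Real.Gamma (x + 1) := by
  have hconv : IntegrableOn (fun u => Real.exp (-u) * u ^ x) (Set.Ioi 0) := by
    simpa only [add_sub_cancel_right] using
      Real.GammaIntegral_convergent (s := x + 1) (by positivity)
  have hsub : Set.Ioi R ⊆ Set.Ioi 0 := Set.Ioi_subset_Ioi hR
  calc Real.exp (-R) * R ^ x = ∫ u in Set.Ioi R, Real.exp (-u) * R ^ x := by
        rw [MeasureTheory.integral_mul_const, integral_exp_neg_Ioi]
    _ ≤ ∫ u in Set.Ioi R, Real.exp (-u) * u ^ x := by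
        refine setIntegral_mono_on ((integrableOn_exp_neg_Ioi R).mul_const _)
          (hconv.mono_set hsub) measurableSet_Ioi fun u (hu : R < u) => ?_
        gcongr
    _ ≤ ∫ u in Set.Ioi 0, Real.exp (-u) * u ^ x := by
        refine setIntegral_mono_set hconv ?_ hsub.eventuallyLE
        filter_upwards [ae_restrict_mem measurableSet_Ioi] with u (hu : 0 < u)
        exact mul_nonneg (Real.exp_nonneg _) (Real.rpow_nonneg hu.le _)
    _ = Real.Gamma (x + 1) := by
        rw [Real.Gamma_eq_integral (by positivity), add_sub_cancel_right]

section MittagLeffler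

variable {γ : ℝ}

lemma summable_norm_mittagLeffler_term (hγ : 0 < γ) (μ : ℝ) (z : ℂ) :
    Summable fun k : ℕ => ‖z ^ k / (Real.Gamma (γ * k + μ) : ℂ)‖ := by
  -- With `R ^ γ = 2‖z‖ + 1`, the lower bound `e⁻ᴿ Rˣ ≤ Γ(x + 1)` beats `‖z‖ ^ k` geometrically.
  obtain ⟨R, hR, hRγ⟩ : ∃ R : ℝ, 0 < R ∧ R ^ γ = 2 * ‖z‖ + 1 :=
    ⟨(2 * ‖z‖ + 1) ^ γ⁻¹, by positivity, Real.rpow_inv_rpow (by positivity) hγ.ne'⟩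
  have hlarge : ∀ᶠ k : ℕ in Filter.atTop, 1 ≤ γ * k + μ :=
    (Filter.tendsto_atTop_add_const_right _ μ
      (tendsto_natCast_atTop_atTop.const_mul_atTop hγ)).eventually_ge_atTop 1
  refine Summable.of_norm_bounded_eventually_nat
    (summable_geometric_two.mul_left (Real.exp R * R ^ (1 - μ))) ?_
  filter_upwards [hlarge] with k hk
  have hΓ : 0 < Real.Gamma (γ * k + μ) := Real.Gamma_pos_of_pos (by linarith)
  have hΓR : Real.exp (-R) * (R ^ (μ - 1) * (2 * ‖z‖ + 1) ^ k) ≤ Real.Gamma (γ * k + μ) := by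
    have hbound := exp_neg_mul_rpow_le_Gamma_add_one hR.le (sub_nonneg.2 hk)
    rwa [sub_add_cancel, show γ * k + μ - 1 = μ - 1 + γ * k by ring, Real.rpow_add hR,
      Real.rpow_mul hR.le, hRγ, Real.rpow_natCast] at hbound
  rw [norm_norm, norm_div, norm_pow, Complex.norm_real, Real.norm_of_nonneg hΓ.le, div_le_iff₀ hΓ]
  calc ‖z‖ ^ k = (1 / 2) ^ k * (2 * ‖z‖) ^ k := by rw [← mul_pow]; congr 1; ring
    _ ≤ (1 / 2) ^ k * (2 * ‖z‖ + 1) ^ k := by gcongr; linarith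
    _ = Real.exp R * R ^ (1 - μ) * (1 / 2) ^ k *
          (Real.exp (-R) * (R ^ (μ - 1) * (2 * ‖z‖ + 1) ^ k)) := by
        rw [Real.exp_neg, ← neg_sub μ 1, Real.rpow_neg hR.le]
        field_simp
    _ ≤ Real.exp R * R ^ (1 - μ) * (1 / 2) ^ k * Real.Gamma (γ * k + μ) := by gcongr

lemma hasSum_mittagLeffler (hγ : 0 < γ) (μ : ℝ) (z : ℂ) :
    HasSum (fun k : ℕ => z ^ k / (Real.Gamma (γ * k + μ) : ℂ)) (mittagLeffler γ μ z) :=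
  (summable_norm_mittagLeffler_term hγ μ z).of_norm.hasSum

lemma norm_mittagLeffler_term_le_of_mem_ball (γ μ : ℝ) {r : ℝ} {w : ℂ}
    (hw : w ∈ Metric.ball (0 : ℂ) r) (k : ℕ) :
    ‖w ^ k / (Real.Gamma (γ * k + μ) : ℂ)‖ ≤ ‖(r : ℂ) ^ k / (Real.Gamma (γ * k + μ) : ℂ)‖ := by
  have hwr : ‖w‖ ≤ ‖(r : ℂ)‖ := by
    rw [Complex.norm_real]
    exact (mem_ball_zero_iff.1 hw).le.trans (le_abs_self r)
  simp only [norm_div, norm_pow]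
  gcongr

lemma differentiable_mittagLeffler (hγ : 0 < γ) (μ : ℝ) : Differentiable ℂ (mittagLeffler γ μ) :=
  fun z => (Complex.differentiableOn_tsum_of_summable_norm
    (summable_norm_mittagLeffler_term hγ μ ((‖z‖ + 1 : ℝ) : ℂ))
    (fun _ => ((differentiable_id.pow _).div_const _).differentiableOn) Metric.isOpen_ball
    (fun k _ hw => norm_mittagLeffler_term_le_of_mem_ball γ μ hw k)).differentiableAt
    (Metric.isOpen_ball.mem_nhds (mem_ball_zero_iff.2 (lt_add_one ‖z‖)))

lemma hasSum_deriv_mittagLeffler (hγ : 0 < γ) (μ : ℝ) (z : ℂ) :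
    HasSum (fun k : ℕ => k * z ^ (k - 1) / (Real.Gamma (γ * k + μ) : ℂ))
      (deriv (mittagLeffler γ μ) z) := by
  have h := Complex.hasSum_deriv_of_summable_norm
    (summable_norm_mittagLeffler_term hγ μ ((‖z‖ + 1 : ℝ) : ℂ))
    (fun _ => ((differentiable_id.pow _).div_const _).differentiableOn) Metric.isOpen_ball
    (fun k _ hw => norm_mittagLeffler_term_le_of_mem_ball γ μ hw k)
    (mem_ball_zero_iff.2 (lt_add_one ‖z‖))
  simp only [deriv_div_const, deriv_pow_field] at h
  exact h

lemma inv_Gamma_eq_self_mul_inv_Gamma_add_one (x : ℝ) :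
    (Real.Gamma x)⁻¹ = x * (Real.Gamma (x + 1))⁻¹ := by
  rcases eq_or_ne x 0 with rfl | hx
  · simp only [Real.Gamma_zero, inv_zero, zero_mul]
  · rw [Real.Gamma_add_one hx, mul_inv, mul_inv_cancel_left₀ hx]

lemma mul_deriv_mittagLeffler_add_one (hγ : 0 < γ) (μ : ℝ) (z : ℂ) :
    γ * z * deriv (mittagLeffler γ (μ + 1)) z + μ * mittagLeffler γ (μ + 1) z =
      mittagLeffler γ μ z := by
  have hterm (k : ℕ) : γ * z * (k * z ^ (k - 1) / (Real.Gamma (γ * k + (μ + 1)) : ℂ)) +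
      μ * (z ^ k / (Real.Gamma (γ * k + (μ + 1)) : ℂ)) =
        z ^ k / (Real.Gamma (γ * k + μ) : ℂ) := by
    have hΓ : (Real.Gamma (γ * k + μ) : ℂ)⁻¹ =
        (γ * k + μ) * (Real.Gamma (γ * k + (μ + 1)) : ℂ)⁻¹ := by
      rw [← add_assoc]
      exact_mod_cast inv_Gamma_eq_self_mul_inv_Gamma_add_one (γ * k + μ)
    have hpow : z * (k * z ^ (k - 1)) = k * z ^ k := by
      cases k with
      | zero => simp
      | succ n => rw [Nat.add_sub_cancel]; ring
    simp only [div_eq_mul_inv, hΓ]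
    linear_combination (γ * (Real.Gamma (γ * k + (μ + 1)) : ℂ)⁻¹) * hpow
  have hseries := ((hasSum_deriv_mittagLeffler hγ (μ + 1) z).mul_left (γ * z)).add
    ((hasSum_mittagLeffler hγ (μ + 1) z).mul_left (μ : ℂ))
  simp only [hterm] at hseries
  exact hseries.unique (hasSum_mittagLeffler hγ μ z)

-- In Lean `1 / Γ(0) = 0`, which is also the value of the entire function `1 / Γ` there, so the
-- series for `μ = 0` has no constant term.
lemma mittagLeffler_zero_right (hγ : 0 < γ) (z : ℂ) :
    mittagLeffler γ 0 z = z * mittagLeffler γ γ z := by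
  rw [mittagLeffler, (hasSum_mittagLeffler hγ 0 z).summable.tsum_eq_zero_add, mittagLeffler,
    ← tsum_mul_left]
  simp only [Nat.cast_zero, mul_zero, add_zero, Real.Gamma_zero, Complex.ofReal_zero, div_zero,
    zero_add]
  refine tsum_congr fun k => ?_
  rw [pow_succ', mul_div_assoc, Nat.cast_add_one, mul_add_one]

lemma hasDerivAt_rpow_mul_mittagLeffler (hγ : 0 < γ) (μ : ℝ) (η : ℂ) {x : ℝ} (hx : 0 < x) :
    HasDerivAt (fun s : ℝ => ((s ^ μ : ℝ) : ℂ) * mittagLeffler γ (μ + 1) (η * ((s ^ γ : ℝ) : ℂ)))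
      (((x ^ (μ - 1) : ℝ) : ℂ) * mittagLeffler γ μ (η * ((x ^ γ : ℝ) : ℂ))) x := by
  have hrpow (p : ℝ) : HasDerivAt (fun s : ℝ => ((s ^ p : ℝ) : ℂ)) (p * (x ^ (p - 1) : ℝ)) x := by
    exact_mod_cast (Real.hasDerivAt_rpow_const (p := p) (Or.inl hx.ne')).ofReal_comp
  have hML := ((differentiable_mittagLeffler hγ (μ + 1) (η * ((x ^ γ : ℝ) : ℂ))).hasDerivAt).comp x
    ((hrpow γ).const_mul η)
  refine ((hrpow μ).mul hML).congr_deriv ?_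
  have hsplit (p : ℝ) : ((x ^ p : ℝ) : ℂ) = (x ^ (p - 1) : ℝ) * x := by
    exact_mod_cast (by rw [← Real.rpow_add_one hx.ne', sub_add_cancel] : x ^ p = x ^ (p - 1) * x)
  rw [← mul_deriv_mittagLeffler_add_one hγ μ, Function.comp_apply, hsplit μ]
  linear_combination -((x ^ (μ - 1) : ℝ) * γ * η *
    deriv (mittagLeffler γ (μ + 1)) (η * ((x ^ γ : ℝ) : ℂ))) * hsplit γ

lemma hasDerivAt_mittagLeffler_one_rpow (hγ : 0 < γ) (η : ℂ) {x : ℝ} (hx : 0 < x) :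
    HasDerivAt (fun s : ℝ => mittagLeffler γ 1 (η * ((s ^ γ : ℝ) : ℂ)))
      (η * (((x ^ (γ - 1) : ℝ) : ℂ) * mittagLeffler γ γ (η * ((x ^ γ : ℝ) : ℂ)))) x := by
  have h := hasDerivAt_rpow_mul_mittagLeffler hγ 0 η hx
  simp only [Real.rpow_zero, Complex.ofReal_one, one_mul, zero_add, zero_sub,
    mittagLeffler_zero_right hγ] at h
  refine h.congr_deriv ?_
  rw [show γ - 1 = -1 + γ by ring, Real.rpow_add hx]
  push_cast
  ring

end MittagLeffler

section RiemannLiouville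

variable {E : Type*} [NormedAddCommGroup E] [NormedSpace ℝ E] {α β x : ℝ}

/-- The Riemann–Liouville fractional integral of order `α` of `g`, with base point `0`. A Caputo
derivative of order `ν ∈ (0, 1)` is the integral of order `1 - ν` of the ordinary derivative. -/
noncomputable def riemannLiouvilleIntegral (α : ℝ) (g : ℝ → E) (x : ℝ) : E :=
  (Real.Gamma α)⁻¹ • ∫ s in 0..x, (x - s) ^ (α - 1) • g s

lemma integral_sub_rpow_mul_rpow (hα : 0 < α) (hβ : 0 < β) (hx : 0 < x) :
    ∫ s in 0..x, (x - s) ^ (α - 1) * s ^ (β - 1) =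
      Real.Gamma α * (Real.Gamma β / Real.Gamma (β + α) * x ^ (β + α - 1)) := by
  have hbeta := Complex.betaIntegral_scaled β α hx
  rw [Complex.betaIntegral_eq_Gamma_mul_div _ _ (by simpa) (by simpa), ← Complex.ofReal_add,
    Complex.Gamma_ofReal, Complex.Gamma_ofReal, Complex.Gamma_ofReal] at hbeta
  apply Complex.ofReal_injective
  calc ((∫ s in 0..x, (x - s) ^ (α - 1) * s ^ (β - 1) : ℝ) : ℂ)
      = ∫ s in 0..x, (s : ℂ) ^ ((β : ℂ) - 1) * ((x : ℂ) - s) ^ ((α : ℂ) - 1) := by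
        rw [← intervalIntegral.integral_ofReal]
        refine integral_congr fun s hs => ?_
        rw [Set.uIcc_of_le hx.le] at hs
        simp only [Complex.ofReal_mul, Complex.ofReal_cpow (sub_nonneg.2 hs.2),
          Complex.ofReal_cpow hs.1]
        push_cast
        ring
    _ = _ := by
        rw [hbeta]
        push_cast [Complex.ofReal_cpow hx.le]
        ring

lemma Gamma_div_Gamma_mul_rpow_pos (hα : 0 < α) (hβ : 0 < β) (hx : 0 < x) :
    0 < Real.Gamma β / Real.Gamma (β + α) * x ^ (β + α - 1) :=
  mul_pos (div_pos (Real.Gamma_pos_of_pos hβ) (Real.Gamma_pos_of_pos (add_pos hβ hα)))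
    (Real.rpow_pos_of_pos hx _)

lemma intervalIntegrable_sub_rpow_mul_rpow (hα : 0 < α) (hβ : 0 < β) (hx : 0 < x) :
    IntervalIntegrable (fun s => (x - s) ^ (α - 1) * s ^ (β - 1)) volume 0 x := by
  -- A non-integrable function would have integral `0`, but the beta integral is positive.
  refine not_imp_comm.1 intervalIntegral.integral_undef (ne_of_gt ?_)
  rw [integral_sub_rpow_mul_rpow hα hβ hx]
  exact mul_pos (Real.Gamma_pos_of_pos hα) (Gamma_div_Gamma_mul_rpow_pos hα hβ hx)

lemma riemannLiouvilleIntegral_congr {f g : ℝ → E} (hx : 0 ≤ x) (h : Set.EqOn f g (Set.Ioc 0 x)) :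
    riemannLiouvilleIntegral α f x = riemannLiouvilleIntegral α g x := by
  simp only [riemannLiouvilleIntegral, integral_of_le hx]
  congr 1
  exact setIntegral_congr_fun measurableSet_Ioc fun s hs => by simp only [h hs]

lemma riemannLiouvilleIntegral_const_smul {𝕜 : Type*} [NontriviallyNormedField 𝕜] [NormedSpace 𝕜 E]
    [SMulCommClass ℝ 𝕜 E] (α : ℝ) (c : 𝕜) (g : ℝ → E) (x : ℝ) :
    riemannLiouvilleIntegral α (fun s => c • g s) x = c • riemannLiouvilleIntegral α g x := by
  simp only [riemannLiouvilleIntegral, smul_comm _ c, intervalIntegral.integral_smul]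

lemma riemannLiouvilleIntegral_rpow_smul [CompleteSpace E] (hα : 0 < α) (hβ : 0 < β) (hx : 0 < x)
    (c : E) :
    riemannLiouvilleIntegral α (fun s => s ^ (β - 1) • c) x =
      (Real.Gamma β / Real.Gamma (β + α) * x ^ (β + α - 1)) • c := by
  simp only [riemannLiouvilleIntegral, smul_smul, intervalIntegral.integral_smul_const,
    integral_sub_rpow_mul_rpow hα hβ hx, inv_mul_cancel_left₀ (Real.Gamma_pos_of_pos hα).ne']

lemma riemannLiouvilleIntegral_tsum {ι : Type*} [Countable ι] {g : ι → ℝ → E} (hα : 0 < α)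
    (hx : 0 ≤ x)
    (hg_int : ∀ i, IntervalIntegrable (fun s => (x - s) ^ (α - 1) • g i s) volume 0 x)
    (hsum : Summable fun i => riemannLiouvilleIntegral α (fun s => ‖g i s‖) x) :
    riemannLiouvilleIntegral α (fun s => ∑' i, g i s) x =
      ∑' i, riemannLiouvilleIntegral α (g i) x := by
  have hnorm (i : ι) : ∫ s in Set.Ioc 0 x, ‖(x - s) ^ (α - 1) • g i s‖ =
      Real.Gamma α * riemannLiouvilleIntegral α (fun s => ‖g i s‖) x := by
    rw [riemannLiouvilleIntegral, smul_eq_mul, mul_inv_cancel_left₀ (Real.Gamma_pos_of_pos hα).ne',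
      integral_of_le hx]
    refine setIntegral_congr_fun measurableSet_Ioc fun s hs => ?_
    simp only [norm_smul, smul_eq_mul,
      Real.norm_of_nonneg (Real.rpow_nonneg (sub_nonneg.2 hs.2) (α - 1))]
  have hnorm_sum : Summable fun i => ∫ s in Set.Ioc 0 x, ‖(x - s) ^ (α - 1) • g i s‖ := by
    simpa only [hnorm] using hsum.mul_left (Real.Gamma α)
  simp only [riemannLiouvilleIntegral, integral_of_le hx, ← tsum_const_smul'']
  exact ((hasSum_integral_of_summable_integral_norm (fun i => (hg_int i).1) hnorm_sum).const_smul
    (Real.Gamma α)⁻¹).tsum_eq.symm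

lemma riemannLiouvilleIntegral_tsum_rpow_smul {ι : Type*} [Countable ι] [CompleteSpace E]
    {c : ι → E} {b : ι → ℝ} (hα : 0 < α) (hb : ∀ i, 0 < b i) (hx : 0 < x)
    (hsum : Summable fun i =>
      ‖(Real.Gamma (b i) / Real.Gamma (b i + α) * x ^ (b i + α - 1)) • c i‖) :
    riemannLiouvilleIntegral α (fun s => ∑' i, s ^ (b i - 1) • c i) x =
      ∑' i, (Real.Gamma (b i) / Real.Gamma (b i + α) * x ^ (b i + α - 1)) • c i := by
  have hnorm (i : ι) : riemannLiouvilleIntegral α (fun s => ‖s ^ (b i - 1) • c i‖) x =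
      ‖(Real.Gamma (b i) / Real.Gamma (b i + α) * x ^ (b i + α - 1)) • c i‖ := by
    rw [norm_smul, Real.norm_of_nonneg (Gamma_div_Gamma_mul_rpow_pos hα (hb i) hx).le,
      ← smul_eq_mul, ← riemannLiouvilleIntegral_rpow_smul hα (hb i) hx]
    refine riemannLiouvilleIntegral_congr hx.le fun s hs => ?_
    simp only [norm_smul, smul_eq_mul, Real.norm_of_nonneg (Real.rpow_nonneg hs.1.le (b i - 1))]
  have hg_int (i : ι) :
      IntervalIntegrable (fun s => (x - s) ^ (α - 1) • s ^ (b i - 1) • c i) volume 0 x := by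
    have hbeta := intervalIntegrable_sub_rpow_mul_rpow hα (hb i) hx
    simp only [smul_smul]
    exact ⟨hbeta.1.smul_const (c i), hbeta.2.smul_const (c i)⟩
  rw [riemannLiouvilleIntegral_tsum hα hx.le hg_int (by simpa only [hnorm] using hsum)]
  exact tsum_congr fun i => riemannLiouvilleIntegral_rpow_smul hα (hb i) hx (c i)

lemma hasSum_rpow_mul_mittagLeffler {γ : ℝ} (hγ : 0 < γ) (μ a : ℝ) (η : ℂ) (hx : 0 < x) :
    HasSum (fun k : ℕ => x ^ (γ * k + a) • (η ^ k / (Real.Gamma (γ * k + μ) : ℂ)))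
      (((x ^ a : ℝ) : ℂ) * mittagLeffler γ μ (η * ((x ^ γ : ℝ) : ℂ))) := by
  refine ((hasSum_mittagLeffler hγ μ _).mul_left _).congr_fun fun k => ?_
  rw [Complex.real_smul, Real.rpow_add hx, Real.rpow_mul hx.le, Real.rpow_natCast]
  push_cast
  ring

lemma riemannLiouvilleIntegral_rpow_mul_mittagLeffler {γ μ : ℝ} (hγ : 0 < γ) (hμ : 0 < μ)
    (hα : 0 < α) (η : ℂ) (hx : 0 < x) :
    riemannLiouvilleIntegral α
        (fun s => ((s ^ (μ - 1) : ℝ) : ℂ) * mittagLeffler γ μ (η * ((s ^ γ : ℝ) : ℂ))) x =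
      ((x ^ (μ + α - 1) : ℝ) : ℂ) * mittagLeffler γ (μ + α) (η * ((x ^ γ : ℝ) : ℂ)) := by
  have hb (k : ℕ) : 0 < γ * k + μ := by positivity
  have hcancel (k : ℕ) : (Real.Gamma (γ * k + μ) / Real.Gamma (γ * k + μ + α) *
      x ^ (γ * k + μ + α - 1)) • (η ^ k / (Real.Gamma (γ * k + μ) : ℂ)) =
        x ^ (γ * k + (μ + α - 1)) • (η ^ k / (Real.Gamma (γ * k + (μ + α)) : ℂ)) := by
    have hΓ : (Real.Gamma (γ * k + μ) : ℂ) ≠ 0 := by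
      exact_mod_cast (Real.Gamma_pos_of_pos (hb k)).ne'
    simp only [Complex.real_smul, ← add_assoc, ← add_sub_assoc]
    push_cast
    field_simp
  have hseries := hasSum_rpow_mul_mittagLeffler hγ (μ + α) (μ + α - 1) η hx
  calc riemannLiouvilleIntegral α
        (fun s => ((s ^ (μ - 1) : ℝ) : ℂ) * mittagLeffler γ μ (η * ((s ^ γ : ℝ) : ℂ))) x
      = riemannLiouvilleIntegral α (fun s => ∑' k : ℕ, s ^ (γ * k + μ - 1) •
          (η ^ k / (Real.Gamma (γ * k + μ) : ℂ))) x := by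
        refine riemannLiouvilleIntegral_congr hx.le fun s hs => ?_
        simp only [← (hasSum_rpow_mul_mittagLeffler hγ μ (μ - 1) η hs.1).tsum_eq, add_sub_assoc]
    _ = ∑' k : ℕ, x ^ (γ * k + (μ + α - 1)) • (η ^ k / (Real.Gamma (γ * k + (μ + α)) : ℂ)) := by
        rw [riemannLiouvilleIntegral_tsum_rpow_smul hα hb hx
          (by simpa only [hcancel] using hseries.summable.norm)]
        exact tsum_congr hcancel
    _ = _ := hseries.tsum_eq

end RiemannLiouville

section Hadamard

variable {t0 t : ℝ}

lemma hasDerivAt_log_div_const (ht0 : t0 ≠ 0) {τ : ℝ} (hτ : τ ≠ 0) :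
    HasDerivAt (fun u => Real.log (u / t0)) τ⁻¹ τ := by
  convert ((hasDerivAt_id' τ).div_const t0).log (div_ne_zero hτ ht0) using 1
  field_simp

lemma integral_inv_smul_comp_log_div {E : Type*} [NormedAddCommGroup E] [NormedSpace ℝ E]
    (ht0 : 0 < t0) (ht : t0 ≤ t) (F : ℝ → E) :
    ∫ τ in t0..t, τ⁻¹ • F (Real.log (τ / t0)) = ∫ s in 0..Real.log (t / t0), F s := by
  have hpos (τ : ℝ) (hτ : t0 ≤ τ) : 0 < τ := ht0.trans_le hτ
  have hsubst := integral_deriv_smul_comp_of_deriv_nonneg (g := F) (a := t0) (b := t)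
    (f := fun τ => Real.log (τ / t0)) (f' := fun τ => τ⁻¹) ?_ ?_ ?_
  · simpa only [Function.comp_apply, div_self ht0.ne', Real.log_one] using hsubst
  · rw [Set.uIcc_of_le ht]
    exact fun τ hτ => (hasDerivAt_log_div_const ht0.ne'
      (hpos τ hτ.1).ne').continuousAt.continuousWithinAt
  · rw [min_eq_left ht]
    exact fun τ hτ => hasDerivAt_log_div_const ht0.ne' (hpos τ hτ.1.le).ne'
  · rw [min_eq_left ht]
    exact fun τ hτ => inv_nonneg.2 (hpos τ hτ.1.le).le

lemma hadamardCaputoC_comp_log_div (ν : ℝ) (ht0 : 0 < t0) (ht : t0 ≤ t) {g g' : ℝ → ℂ}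
    (hg : ∀ s, 0 < s → HasDerivAt g (g' s) s) :
    hadamardCaputoC ν t0 (fun τ => g (Real.log (τ / t0))) t =
      riemannLiouvilleIntegral (1 - ν) g' (Real.log (t / t0)) := by
  rw [hadamardCaputoC, riemannLiouvilleIntegral, ← integral_inv_smul_comp_log_div ht0 ht,
    Complex.real_smul, one_div, Complex.ofReal_inv, integral_of_le ht, integral_of_le ht]
  congr 1
  refine setIntegral_congr_fun measurableSet_Ioc fun τ hτ => ?_
  have hτ0 : 0 < τ := ht0.trans hτ.1
  have hderiv : deriv (fun τ => g (Real.log (τ / t0))) τ = τ⁻¹ • g' (Real.log (τ / t0)) :=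
    ((hg _ (Real.log_pos ((one_lt_div ht0).2 hτ.1))).scomp τ
      (hasDerivAt_log_div_const ht0.ne' hτ0.ne')).deriv
  have hlog : Real.log (t / τ) = Real.log (t / t0) - Real.log (τ / t0) := by
    rw [← Real.log_div (div_pos (hτ0.trans_le hτ.2) ht0).ne' (div_pos hτ0 ht0).ne',
      div_div_div_cancel_right₀ ht0.ne']
  have hτC : (τ : ℂ) ≠ 0 := Complex.ofReal_ne_zero.2 hτ0.ne'
  simp only [hderiv, hlog, Complex.real_smul, show 1 - ν - 1 = -ν by ring, Complex.ofReal_inv]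
  field_simp

end Hadamard

/-- For `ν ∈ (0,1)`, `t0 > 0` and `η ∈ ℂ`, the function
`f t = E_{ν,1}(η (log (t/t0))^ν)` is an eigenfunction of the Caputo-type Hadamard
derivative of order `ν` with eigenvalue `η`. -/
theorem hadamardCaputo_mittagLeffler_eigenfunction
    (ν t0 : ℝ) (hν : ν ∈ Set.Ioo (0 : ℝ) 1) (ht0 : 0 < t0) (η : ℂ)
    (f : ℝ → ℂ)
    (hf : f = fun t => mittagLeffler ν 1 (η * (((Real.log (t / t0)) ^ ν : ℝ) : ℂ)))
    (t : ℝ) (ht : t0 < t) :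
    hadamardCaputoC ν t0 f t = η * f t := by
  obtain ⟨hν0, hν1⟩ := hν
  have hL : 0 < Real.log (t / t0) := Real.log_pos ((one_lt_div ht0).2 ht)
  let g : ℝ → ℂ := fun s => ((s ^ (ν - 1) : ℝ) : ℂ) * mittagLeffler ν ν (η * ((s ^ ν : ℝ) : ℂ))
  calc hadamardCaputoC ν t0 f t
      = riemannLiouvilleIntegral (1 - ν) (fun s => η • g s) (Real.log (t / t0)) := by
        rw [hf]
        exact hadamardCaputoC_comp_log_div (g := fun s => mittagLeffler ν 1 (η * ((s ^ ν : ℝ) : ℂ)))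
          ν ht0 ht.le fun s hs => hasDerivAt_mittagLeffler_one_rpow hν0 η hs
    _ = η * riemannLiouvilleIntegral (1 - ν) g (Real.log (t / t0)) :=
        riemannLiouvilleIntegral_const_smul _ _ _ _
    _ = η * f t := by
        rw [riemannLiouvilleIntegral_rpow_mul_mittagLeffler hν0 hν0 (sub_pos.2 hν1) η hL,
          add_sub_cancel, sub_self, Real.rpow_zero, Complex.ofReal_one, one_mul, hf]
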